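/- arXiv:2110.11721 — 2 statements merged into one kernel-verified Lean document; each statement's English description precedes it below -/
import Mathlib

section
/- Let H be a real Hilbert space, μ > 0, L > 0, and let g : H → ℝ be differentiable, μ-strongly convex, with L-Lipschitz gradient, and let y* ∈ H be its global minimizer. Let (Ω, P) be a probability space and G : Ω → H strongly measurable with E‖G‖² < ∞, E[G] = ∇g(y₋), and E‖G − ∇g(y₋)‖² ≤ σ²·(1 + ‖∇g(y₋)‖²) for a given y₋ ∈ H and some σ ≥ 0. Let δ > 0 satisfy δ ≤ 2/(3μ) and 2δ(1 + σ²)L² ≤ μ, define y(ω) = y₋ − δ·G(ω), and let y*' ∈ H be any point with ‖y*' − y*‖ ≤ K for some K ≥ 0. Then E‖y − y*'‖² ≤ (1 − δμ/2)·‖y₋ − y*‖² + (2/(δμ))·K² + 4δ²σ². -/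
open MeasureTheory
open scoped RealInnerProductSpace

/-!
The drift `ystar' - ystar` is deterministic, so in the bias-variance decomposition of
`E‖(yprev - δ • G) - ystar'‖²` it only enters the bias `‖(yprev - δ • ∇g(yprev)) - ystar'‖²`. With
`t = δ * μ`, Young's inequality, weighted so that `‖ystar' - ystar‖²` gets the coefficient `2 / t`,
inflates the squared error of the exact gradient step by `2 / (2 - t)`. By the step-size condition,
that error and the variance together are at most `(1 - 3 * t / 2) * ‖yprev - ystar‖²`, up to the
additive noise `δ² * σ²`, and `1 - 3 * t / 2 ≤ (1 - t / 2)²` absorbs the inflation.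
-/

lemma norm_sub_sq_le_weighted {E : Type*} [SeminormedAddCommGroup E] {s : ℝ} (hs : 0 < s)
    (u v : E) : ‖u - v‖ ^ 2 ≤ (1 + s) * ‖u‖ ^ 2 + (1 + s⁻¹) * ‖v‖ ^ 2 :=
  calc ‖u - v‖ ^ 2 ≤ (‖u‖ + ‖v‖) ^ 2 := by gcongr; exact norm_sub_le u v
    _ = ‖u‖ ^ 2 + 2 * ‖u‖ * ‖v‖ + ‖v‖ ^ 2 := add_sq _ _
    _ ≤ ‖u‖ ^ 2 + (s * ‖u‖ ^ 2 + s⁻¹ * ‖v‖ ^ 2) + ‖v‖ ^ 2 := by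
      gcongr
      exact two_mul_le_add_mul_sq hs
    _ = (1 + s) * ‖u‖ ^ 2 + (1 + s⁻¹) * ‖v‖ ^ 2 := by ring

lemma two_div_two_sub_mul_add_le {t A q v : ℝ} (ht : 0 ≤ t) (ht2 : t < 2) (hA : 0 ≤ A)
    (hv : 0 ≤ v) (hqv : q + v ≤ t / 2 * A) :
    2 / (2 - t) * ((1 - 2 * t) * A + q) + v ≤ (1 - t / 2) * A := by
  have h2t : 0 < 2 - t := sub_pos.2 ht2
  have hinflation : 1 ≤ 2 / (2 - t) := by
    rw [one_le_div h2t]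
    linarith
  have hrate : 2 / (2 - t) * (1 - 3 / 2 * t) ≤ 1 - t / 2 := by
    rw [div_mul_eq_mul_div, div_le_iff₀ h2t]
    linarith [sq_nonneg t]
  calc 2 / (2 - t) * ((1 - 2 * t) * A + q) + v
      ≤ 2 / (2 - t) * ((1 - 2 * t) * A + q) + 2 / (2 - t) * v := by
        gcongr
        exact le_mul_of_one_le_left hv hinflation
    _ = 2 / (2 - t) * ((1 - 2 * t) * A + (q + v)) := by ring
    _ ≤ 2 / (2 - t) * ((1 - 2 * t) * A + t / 2 * A) := by gcongr
    _ = 2 / (2 - t) * (1 - 3 / 2 * t) * A := by ring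
    _ ≤ (1 - t / 2) * A := by gcongr

section InnerProductSpace

variable {H : Type*} [SeminormedAddCommGroup H] [InnerProductSpace ℝ H]

lemma mul_norm_sub_sq_le_inner_sub_of_strongly_convex {g : H → ℝ} {g' : H → H} {μ : ℝ}
    (hg : ∀ y z, g y + ⟪g' y, z - y⟫ + μ / 2 * ‖z - y‖ ^ 2 ≤ g z) (y z : H) :
    μ * ‖y - z‖ ^ 2 ≤ ⟪g' y - g' z, y - z⟫ := by
  have hyz := hg y z
  have hzy := hg z y
  rw [← neg_sub y z, inner_neg_right, norm_neg] at hyz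
  rw [inner_sub_left]
  linarith

lemma norm_sub_smul_sq_le_of_le_inner {a n : H} {δ μ : ℝ} (hδ : 0 ≤ δ)
    (hmono : μ * ‖a‖ ^ 2 ≤ ⟪n, a⟫) :
    ‖a - δ • n‖ ^ 2 ≤ (1 - 2 * (δ * μ)) * ‖a‖ ^ 2 + δ ^ 2 * ‖n‖ ^ 2 :=
  calc ‖a - δ • n‖ ^ 2 = ‖a‖ ^ 2 - 2 * (δ * ⟪n, a⟫) + δ ^ 2 * ‖n‖ ^ 2 := by
        rw [norm_sub_sq_real, real_inner_smul_right, real_inner_comm, norm_smul, mul_pow,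
          Real.norm_eq_abs, sq_abs]
    _ ≤ ‖a‖ ^ 2 - 2 * (δ * (μ * ‖a‖ ^ 2)) + δ ^ 2 * ‖n‖ ^ 2 := by gcongr
    _ = (1 - 2 * (δ * μ)) * ‖a‖ ^ 2 + δ ^ 2 * ‖n‖ ^ 2 := by ring

lemma norm_sub_smul_sub_sq_le_of_le_inner {a n d : H} {δ μ : ℝ} (hδ : 0 < δ) (hμ : 0 < μ)
    (hδμ : δ * μ < 2) (hmono : μ * ‖a‖ ^ 2 ≤ ⟪n, a⟫) :
    ‖a - δ • n - d‖ ^ 2 ≤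
      2 / (2 - δ * μ) * ((1 - 2 * (δ * μ)) * ‖a‖ ^ 2 + δ ^ 2 * ‖n‖ ^ 2)
        + 2 / (δ * μ) * ‖d‖ ^ 2 := by
  have ht : 0 < δ * μ := mul_pos hδ hμ
  have h2t : 0 < 2 - δ * μ := sub_pos.2 hδμ
  have hu : 1 + δ * μ / (2 - δ * μ) = 2 / (2 - δ * μ) := by field_simp; ring
  have hd : 1 + (δ * μ / (2 - δ * μ))⁻¹ = 2 / (δ * μ) := by field_simp; ring
  have hyoung := norm_sub_sq_le_weighted (div_pos ht h2t) (a - δ • n) d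
  rw [hu, hd] at hyoung
  refine hyoung.trans ?_
  gcongr
  exact norm_sub_smul_sq_le_of_le_inner hδ.le hmono

end InnerProductSpace

section Hilbert

variable {H : Type*} [NormedAddCommGroup H] [InnerProductSpace ℝ H] [CompleteSpace H]

lemma gradient_eq_zero_of_isLocalMin {g : H → ℝ} {x : H} (hx : IsLocalMin g x) :
    gradient g x = 0 := by
  rw [gradient, hx.fderiv_eq_zero, map_zero]

variable {Ω : Type*} [MeasurableSpace Ω] {P : Measure Ω} [IsProbabilityMeasure P]

lemma integral_norm_sub_sq_eq_bias_add_variance {X : Ω → H} (hX : MemLp X 2 P) (b : H) :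
    ∫ ω, ‖X ω - b‖ ^ 2 ∂P =
      ‖∫ ω, X ω ∂P - b‖ ^ 2 + ∫ ω, ‖X ω - ∫ ω', X ω' ∂P‖ ^ 2 ∂P := by
  set m := ∫ ω, X ω ∂P with hm
  have hXint : Integrable X P := hX.integrable one_le_two
  have hcint : Integrable (fun ω => X ω - m) P := hXint.sub (integrable_const m)
  have hsq : Integrable (fun ω => ‖X ω - m‖ ^ 2) P :=
    (hX.sub (memLp_const m)).integrable_norm_pow two_ne_zero
  have hinner : Integrable (fun ω => ⟪m - b, X ω - m⟫) P := hcint.const_inner _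
  have hcross : ∫ ω, ⟪m - b, X ω - m⟫ ∂P = 0 := by
    rw [integral_inner hcint, integral_sub hXint (integrable_const m), ← hm, integral_const,
      probReal_univ, one_smul, sub_self, inner_zero_right]
  have hexpand (ω : Ω) :
      ‖X ω - b‖ ^ 2 = ‖m - b‖ ^ 2 + 2 * ⟪m - b, X ω - m⟫ + ‖X ω - m‖ ^ 2 := by
    rw [← norm_add_sq_real, add_comm, sub_add_sub_cancel]
  have hlin : Integrable (fun ω => ‖m - b‖ ^ 2 + 2 * ⟪m - b, X ω - m⟫) P :=
    (integrable_const _).add (hinner.const_mul 2)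
  simp_rw [hexpand]
  rw [integral_add hlin hsq, integral_add (integrable_const _) (hinner.const_mul 2),
    integral_const_mul, hcross, integral_const, probReal_univ, one_smul, mul_zero, add_zero]

lemma integral_norm_sub_smul_sub_sq {G : Ω → H} (hG : MemLp G 2 P) {n : H}
    (hmean : ∫ ω, G ω ∂P = n) (δ : ℝ) (y z : H) :
    ∫ ω, ‖y - δ • G ω - z‖ ^ 2 ∂P =
      ‖y - δ • n - z‖ ^ 2 + δ ^ 2 * ∫ ω, ‖G ω - n‖ ^ 2 ∂P := by
  have hneg (v : H) : ‖y - δ • v - z‖ = ‖δ • v - (y - z)‖ := by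
    rw [sub_right_comm, norm_sub_rev]
  have hscale (ω : Ω) : ‖δ • G ω - δ • n‖ ^ 2 = δ ^ 2 * ‖G ω - n‖ ^ 2 := by
    rw [← smul_sub, norm_smul, mul_pow, Real.norm_eq_abs, sq_abs]
  have hbias := integral_norm_sub_sq_eq_bias_add_variance (hG.const_smul δ) (y - z)
  simp only [Pi.smul_apply, integral_smul, hmean, hscale, integral_const_mul] at hbias
  simpa only [hneg] using hbias

theorem inner_sgd_contraction_with_drift_general {μ L σ δ K : ℝ} {F : H → H} {x x' y : H}
    {G : Ω → H} (hμ : 0 < μ) (hx : F x = 0) (hmono : μ * ‖y - x‖ ^ 2 ≤ ⟪F y - F x, y - x⟫)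
    (hlip : ‖F y - F x‖ ≤ L * ‖y - x‖)
    (hG : MemLp G 2 P) (hmean : ∫ ω, G ω ∂P = F y)
    (hvar : ∫ ω, ‖G ω - F y‖ ^ 2 ∂P ≤ σ ^ 2 * (1 + ‖F y‖ ^ 2))
    (hδ : 0 < δ) (hδμ : δ * μ < 2) (hstep : 2 * δ * (1 + σ ^ 2) * L ^ 2 ≤ μ)
    (hdrift : ‖x' - x‖ ≤ K) :
    ∫ ω, ‖y - δ • G ω - x'‖ ^ 2 ∂P ≤
      (1 - δ * μ / 2) * ‖y - x‖ ^ 2 + 2 / (δ * μ) * K ^ 2 + δ ^ 2 * σ ^ 2 := by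
  rw [hx, sub_zero] at hmono hlip
  set t := δ * μ with ht
  have ht0 : 0 < t := mul_pos hδ hμ
  have hbias : ‖y - δ • F y - x'‖ ^ 2 ≤
      2 / (2 - t) * ((1 - 2 * t) * ‖y - x‖ ^ 2 + δ ^ 2 * ‖F y‖ ^ 2) + 2 / t * K ^ 2 := by
    rw [← sub_sub_sub_cancel_right _ x' x, sub_right_comm y]
    refine (norm_sub_smul_sub_sq_le_of_le_inner hδ hμ hδμ hmono).trans ?_
    gcongr
  have hgrad : δ ^ 2 * ‖F y‖ ^ 2 + δ ^ 2 * σ ^ 2 * ‖F y‖ ^ 2 ≤ t / 2 * ‖y - x‖ ^ 2 :=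
    calc δ ^ 2 * ‖F y‖ ^ 2 + δ ^ 2 * σ ^ 2 * ‖F y‖ ^ 2
        = δ ^ 2 * (1 + σ ^ 2) * ‖F y‖ ^ 2 := by ring
      _ ≤ δ ^ 2 * (1 + σ ^ 2) * (L * ‖y - x‖) ^ 2 := by gcongr
      _ = δ / 2 * (2 * δ * (1 + σ ^ 2) * L ^ 2) * ‖y - x‖ ^ 2 := by ring
      _ ≤ δ / 2 * μ * ‖y - x‖ ^ 2 := by gcongr
      _ = t / 2 * ‖y - x‖ ^ 2 := by rw [ht]; ring
  calc ∫ ω, ‖y - δ • G ω - x'‖ ^ 2 ∂P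
      = ‖y - δ • F y - x'‖ ^ 2 + δ ^ 2 * ∫ ω, ‖G ω - F y‖ ^ 2 ∂P :=
        integral_norm_sub_smul_sub_sq hG hmean δ y x'
    _ ≤ 2 / (2 - t) * ((1 - 2 * t) * ‖y - x‖ ^ 2 + δ ^ 2 * ‖F y‖ ^ 2) + 2 / t * K ^ 2
          + δ ^ 2 * (σ ^ 2 * (1 + ‖F y‖ ^ 2)) := by gcongr
    _ = 2 / (2 - t) * ((1 - 2 * t) * ‖y - x‖ ^ 2 + δ ^ 2 * ‖F y‖ ^ 2)
          + δ ^ 2 * σ ^ 2 * ‖F y‖ ^ 2 + 2 / t * K ^ 2 + δ ^ 2 * σ ^ 2 := by ring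
    _ ≤ (1 - t / 2) * ‖y - x‖ ^ 2 + 2 / t * K ^ 2 + δ ^ 2 * σ ^ 2 := by
      gcongr
      exact two_div_two_sub_mul_add_le ht0.le hδμ (sq_nonneg _) (by positivity) hgrad

end Hilbert

/-- One-step form of Lemma 1 of the paper: stochastic-gradient contraction for the
inner problem, allowing a drift of the target minimizer. -/
theorem inner_sgd_contraction_with_drift
    {H : Type*} [NormedAddCommGroup H] [InnerProductSpace ℝ H] [CompleteSpace H]
    (μ L : ℝ) (hμ : 0 < μ) (hL : 0 < L)
    (g : H → ℝ) (hdiff : Differentiable ℝ g)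
    (hsc : ∀ y z : H,
      g z ≥ g y + ⟪gradient g y, z - y⟫ + (μ / 2) * ‖z - y‖ ^ 2)
    (hlip : ∀ y z : H, ‖gradient g y - gradient g z‖ ≤ L * ‖y - z‖)
    (ystar : H) (hystar : ∀ z : H, g ystar ≤ g z)
    {Ω : Type*} [MeasurableSpace Ω] (P : Measure Ω) [IsProbabilityMeasure P]
    (G : Ω → H) (hGm : StronglyMeasurable G)
    (hGi : Integrable (fun ω => ‖G ω‖ ^ 2) P)
    (yprev : H)
    (hmean : (∫ ω, G ω ∂P) = gradient g yprev)
    (σ : ℝ) (hσ : 0 ≤ σ)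
    (hvar : (∫ ω, ‖G ω - gradient g yprev‖ ^ 2 ∂P) ≤
      σ ^ 2 * (1 + ‖gradient g yprev‖ ^ 2))
    (δ : ℝ) (hδ : 0 < δ) (hδ23 : δ ≤ 2 / (3 * μ))
    (hδμ : 2 * δ * (1 + σ ^ 2) * L ^ 2 ≤ μ)
    (ystar' : H) (K : ℝ) (hK : 0 ≤ K) (hdrift : ‖ystar' - ystar‖ ≤ K) :
    (∫ ω, ‖(yprev - δ • G ω) - ystar'‖ ^ 2 ∂P) ≤
      (1 - δ * μ / 2) * ‖yprev - ystar‖ ^ 2 + (2 / (δ * μ)) * K ^ 2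
        + 4 * δ ^ 2 * σ ^ 2 := by
  have hδμ2 : δ * μ < 2 := by
    rw [le_div_iff₀ (by positivity)] at hδ23
    linarith
  have hG : MemLp G 2 P := (memLp_two_iff_integrable_sq_norm hGm.aestronglyMeasurable).2 hGi
  refine (inner_sgd_contraction_with_drift_general hμ
    (gradient_eq_zero_of_isLocalMin (.of_forall hystar))
    (mul_norm_sub_sq_le_inner_sub_of_strongly_convex hsc yprev ystar) (hlip yprev ystar)
    hG hmean hvar hδ hδμ2 hδμ hdrift).trans ?_
  gcongr
  linarith [sq_nonneg δ]
end

section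
/- Let (Ω, P) be a probability space and H a real Hilbert space. Let h0, h1 : Ω → H be strongly measurable with E‖h0‖² < ∞ and E‖h1‖² < ∞, and set m0 = E[h0], m1 = E[h1]. Assume E‖h1 − m1‖² ≤ σ² and E‖h1 − h0‖² ≤ M·η²·D² for nonnegative constants σ, M, η, D. Let y₋ ∈ H, δ ∈ [0,1], and define y(ω) = (1 − δ)(y₋ − h0(ω)) + h1(ω). Then E‖y − m1‖² ≤ (1 − δ)²·‖y₋ − m0‖² + 2δ²σ² + 2(1 − δ)²·M·η²·D². -/
open MeasureTheory

/-!
Up to a constant, `y` is `(1 - δ) • (h1 - h0) + δ • h1`, and its mean differs from `m1` by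
`(1 - δ) • (yprev - m0)`. The bias-variance decomposition of `E‖y - m1‖²` therefore leaves the
variance of this combination, which is at most `2 (1 - δ)² Var(h1 - h0) + 2 δ² Var(h1)`, and
`Var(h1 - h0) ≤ E‖h1 - h0‖²`.
-/

open scoped ProbabilityTheory

section NormedSpace

variable {Ω E : Type*} [MeasurableSpace Ω] {μ : Measure Ω}
  [NormedAddCommGroup E] [NormedSpace ℝ E] {X Y : Ω → E}

lemma norm_smul_add_smul_sq_le (a b : ℝ) (u v : E) :
    ‖a • u + b • v‖ ^ 2 ≤ 2 * a ^ 2 * ‖u‖ ^ 2 + 2 * b ^ 2 * ‖v‖ ^ 2 :=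
  calc
    ‖a • u + b • v‖ ^ 2 ≤ (‖a • u‖ + ‖b • v‖) ^ 2 := by gcongr; exact norm_add_le _ _
    _ ≤ 2 * (‖a • u‖ ^ 2 + ‖b • v‖ ^ 2) := add_sq_le
    _ = 2 * a ^ 2 * ‖u‖ ^ 2 + 2 * b ^ 2 * ‖v‖ ^ 2 := by
      simp only [norm_smul, mul_pow, Real.norm_eq_abs, sq_abs]
      ring

lemma integral_norm_smul_add_smul_sq_le (hX : Integrable (fun ω ↦ ‖X ω‖ ^ 2) μ)
    (hY : Integrable (fun ω ↦ ‖Y ω‖ ^ 2) μ) (a b : ℝ) :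
    ∫ ω, ‖a • X ω + b • Y ω‖ ^ 2 ∂μ ≤
      2 * a ^ 2 * (∫ ω, ‖X ω‖ ^ 2 ∂μ) + 2 * b ^ 2 * ∫ ω, ‖Y ω‖ ^ 2 ∂μ := by
  have hX' := hX.const_mul (2 * a ^ 2)
  have hY' := hY.const_mul (2 * b ^ 2)
  rw [← integral_const_mul, ← integral_const_mul, ← integral_add hX' hY']
  exact integral_mono_of_nonneg (.of_forall fun ω ↦ by positivity) (hX'.add hY')
    (.of_forall fun ω ↦ norm_smul_add_smul_sq_le a b (X ω) (Y ω))

lemma integral_smul_add_smul (hX : Integrable X μ) (hY : Integrable Y μ) (a b : ℝ) :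
    ∫ ω, (a • X ω + b • Y ω) ∂μ = a • μ[X] + b • μ[Y] := by
  rw [integral_add (hX.fun_smul a) (hY.fun_smul b), integral_smul, integral_smul]

lemma integral_norm_smul_add_smul_sub_integral_sq_le [IsFiniteMeasure μ]
    (hX : MemLp X 2 μ) (hY : MemLp Y 2 μ) (a b : ℝ) :
    ∫ ω, ‖a • X ω + b • Y ω - ∫ ω', (a • X ω' + b • Y ω') ∂μ‖ ^ 2 ∂μ ≤
      2 * a ^ 2 * (∫ ω, ‖X ω - μ[X]‖ ^ 2 ∂μ) + 2 * b ^ 2 * ∫ ω, ‖Y ω - μ[Y]‖ ^ 2 ∂μ := by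
  simp_rw [integral_smul_add_smul (hX.integrable one_le_two) (hY.integrable one_le_two),
    add_sub_add_comm, ← smul_sub]
  exact integral_norm_smul_add_smul_sq_le
    ((hX.sub (memLp_const μ[X])).integrable_norm_pow two_ne_zero)
    ((hY.sub (memLp_const μ[Y])).integrable_norm_pow two_ne_zero) a b

end NormedSpace

section InnerProductSpace

variable {Ω H : Type*} [MeasurableSpace Ω] {P : Measure Ω} [IsProbabilityMeasure P]
  [NormedAddCommGroup H] [InnerProductSpace ℝ H] [CompleteSpace H] {X : Ω → H}

lemma integral_norm_sub_const_sq (hX : MemLp X 2 P) (c : H) :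
    ∫ ω, ‖X ω - c‖ ^ 2 ∂P = ‖P[X] - c‖ ^ 2 + ∫ ω, ‖X ω - P[X]‖ ^ 2 ∂P := by
  have hcentred : MemLp (fun ω ↦ X ω - P[X]) 2 P := hX.sub (memLp_const _)
  have hcentred_int := hcentred.integrable one_le_two
  have mean_centred : ∫ ω, (X ω - P[X]) ∂P = 0 := by
    simpa only [average_eq_integral] using integral_sub_average P X
  have hcross : Integrable (fun ω ↦ 2 * inner ℝ (P[X] - c) (X ω - P[X])) P :=
    (hcentred_int.const_inner _).const_mul 2
  have integral_cross : ∫ ω, 2 * inner ℝ (P[X] - c) (X ω - P[X]) ∂P = 0 := by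
    rw [integral_const_mul, integral_inner hcentred_int, mean_centred, inner_zero_right, mul_zero]
  calc
    ∫ ω, ‖X ω - c‖ ^ 2 ∂P
        = ∫ ω, (‖P[X] - c‖ ^ 2 + 2 * inner ℝ (P[X] - c) (X ω - P[X]) + ‖X ω - P[X]‖ ^ 2) ∂P := by
      simp only [← norm_add_sq_real, sub_add_sub_cancel']
    _ = ‖P[X] - c‖ ^ 2 + ∫ ω, ‖X ω - P[X]‖ ^ 2 ∂P := by
      rw [integral_add ((integrable_const _).fun_add hcross)
          (hcentred.integrable_norm_pow two_ne_zero),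
        integral_add (integrable_const _) hcross, integral_cross, integral_const, probReal_univ,
        one_smul, add_zero]

lemma integral_norm_sub_integral_sq_le (hX : MemLp X 2 P) (c : H) :
    ∫ ω, ‖X ω - P[X]‖ ^ 2 ∂P ≤ ∫ ω, ‖X ω - c‖ ^ 2 ∂P := by
  rw [integral_norm_sub_const_sq hX c]
  exact le_add_of_nonneg_left (sq_nonneg _)

theorem scfw_inner_tracking_step_general {h0 h1 : Ω → H} (hh0 : MemLp h0 2 P)
    (hh1 : MemLp h1 2 P) (yprev : H) (δ : ℝ) :
    ∫ ω, ‖((1 - δ) • (yprev - h0 ω) + h1 ω) - P[h1]‖ ^ 2 ∂P ≤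
      (1 - δ) ^ 2 * ‖yprev - P[h0]‖ ^ 2 + 2 * δ ^ 2 * (∫ ω, ‖h1 ω - P[h1]‖ ^ 2 ∂P)
        + 2 * (1 - δ) ^ 2 * ∫ ω, ‖h1 ω - h0 ω‖ ^ 2 ∂P := by
  have hdiff : MemLp (fun ω ↦ h1 ω - h0 ω) 2 P := hh1.sub hh0
  set Z : Ω → H := fun ω ↦ (1 - δ) • (h1 ω - h0 ω) + δ • h1 ω
  have hZ : MemLp Z 2 P := (hdiff.const_smul (1 - δ)).add (hh1.const_smul δ)
  have mean_Z : P[Z] = (1 - δ) • (P[h1] - P[h0]) + δ • P[h1] := by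
    rw [integral_smul_add_smul (hdiff.integrable one_le_two) (hh1.integrable one_le_two),
      integral_sub (hh1.integrable one_le_two) (hh0.integrable one_le_two)]
  have bias : P[Z] - (P[h1] - (1 - δ) • yprev) = (1 - δ) • (yprev - P[h0]) := by
    rw [mean_Z]
    module
  have variance_Z_le := integral_norm_smul_add_smul_sub_integral_sq_le hdiff hh1 (1 - δ) δ
  have variance_diff_le := integral_norm_sub_integral_sq_le hdiff 0
  simp only [sub_zero] at variance_diff_le
  calc
    ∫ ω, ‖((1 - δ) • (yprev - h0 ω) + h1 ω) - P[h1]‖ ^ 2 ∂P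
        = ∫ ω, ‖Z ω - (P[h1] - (1 - δ) • yprev)‖ ^ 2 ∂P := by
      congr! 4 with ω
      module
    _ = (1 - δ) ^ 2 * ‖yprev - P[h0]‖ ^ 2 + ∫ ω, ‖Z ω - P[Z]‖ ^ 2 ∂P := by
      rw [integral_norm_sub_const_sq hZ, bias, norm_smul, mul_pow, Real.norm_eq_abs, sq_abs]
    _ ≤ (1 - δ) ^ 2 * ‖yprev - P[h0]‖ ^ 2 + 2 * δ ^ 2 * (∫ ω, ‖h1 ω - P[h1]‖ ^ 2 ∂P)
        + 2 * (1 - δ) ^ 2 * ∫ ω, ‖h1 ω - h0 ω‖ ^ 2 ∂P := by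
      linear_combination variance_Z_le + 2 * (1 - δ) ^ 2 * variance_diff_le

end InnerProductSpace

/-- One-step form of Lemma 3 of the paper: momentum-based tracking of the inner
function value in the SCFW algorithm. -/
theorem scfw_inner_tracking_step
    {Ω : Type*} [MeasurableSpace Ω] (P : Measure Ω) [IsProbabilityMeasure P]
    {H : Type*} [NormedAddCommGroup H] [InnerProductSpace ℝ H] [CompleteSpace H]
    (h0 h1 : Ω → H)
    (hh0m : StronglyMeasurable h0) (hh1m : StronglyMeasurable h1)
    (hh0i : Integrable (fun ω => ‖h0 ω‖ ^ 2) P)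
    (hh1i : Integrable (fun ω => ‖h1 ω‖ ^ 2) P)
    (m0 m1 : H) (hm0 : m0 = ∫ ω, h0 ω ∂P) (hm1 : m1 = ∫ ω, h1 ω ∂P)
    (σ M η D : ℝ) (hσ : 0 ≤ σ) (hM : 0 ≤ M) (hη : 0 ≤ η) (hD : 0 ≤ D)
    (hvar : (∫ ω, ‖h1 ω - m1‖ ^ 2 ∂P) ≤ σ ^ 2)
    (hdiff : (∫ ω, ‖h1 ω - h0 ω‖ ^ 2 ∂P) ≤ M * η ^ 2 * D ^ 2)
    (yprev : H) (δ : ℝ) (hδ0 : 0 ≤ δ) (hδ1 : δ ≤ 1) :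
    (∫ ω, ‖((1 - δ) • (yprev - h0 ω) + h1 ω) - m1‖ ^ 2 ∂P) ≤
      (1 - δ) ^ 2 * ‖yprev - m0‖ ^ 2 + 2 * δ ^ 2 * σ ^ 2
        + 2 * (1 - δ) ^ 2 * M * η ^ 2 * D ^ 2 := by
  subst hm0 hm1
  have hL0 := (memLp_two_iff_integrable_sq_norm hh0m.aestronglyMeasurable).2 hh0i
  have hL1 := (memLp_two_iff_integrable_sq_norm hh1m.aestronglyMeasurable).2 hh1i
  linear_combination scfw_inner_tracking_step_general hL0 hL1 yprev δ
    + 2 * δ ^ 2 * hvar + 2 * (1 - δ) ^ 2 * hdiff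
end
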